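/- In the SimLine setting, assume u ≥ ⌈log₂ q⌉ + ⌈log₂ v⌉. For every deterministic MPC algorithm with m machines, local memory s bits, and at most q oracle queries per machine per round, every machine i, every round k ≥ 0, every integer a ≥ 0, every set of indices I ⊆ {a+1, …, min(a+v, w)}, and every integer α ≥ 1, the probability over uniformly random (RO, X) that |Q_i^{(k)} ∩ {s_j : j ∈ I}| ≥ α is at most 2^(−(α·(u − ⌈log₂ q⌉ − ⌈log₂ v⌉) − s − 1)). -/

import Mathlib

/-- Probability of `P` under the uniform distribution on a finite type `Ω`. -/
noncomputable def unifProb {Ω : Type} [Fintype Ω] (P : Ω → Prop) : ℝ :=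
  (Set.ncard {ω : Ω | P ω} : ℝ) / (Fintype.card Ω : ℝ)
/-- Bit strings of length `k`. -/
abbrev Bits (k : ℕ) := Fin k → Bool

/-- The `j`-th bit (`0`-based) of a bit string, `false` out of range. -/
def bitAt {k : ℕ} (y : Bits k) (j : ℕ) : Bool := if h : j < k then y ⟨j, h⟩ else false

/-- The `i`-th block (`0`-based) of the input `X = (x_1, …, x_v)`. -/
def getX {u v : ℕ} (X : Fin v → Bits u) (i : ℕ) : Bits u :=
  if h : i < v then X ⟨i, h⟩ else fun _ => false
/-- The SimLine query string built from the step counter `k` (`0`-based, so paper index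
`k+1`) and the current chain value `r`: the concatenation of `x_{(k mod v)+1}` (1-based),
`r`, and `n − 2u` zeros. -/
def simStr (n u v : ℕ) (X : Fin v → Bits u) (k : ℕ) (r : Bits u) : Bits n := fun j =>
  if (j : ℕ) < u then bitAt (getX X (k % v)) (j : ℕ)
  else if (j : ℕ) < 2 * u then bitAt r ((j : ℕ) - u)
  else false

/-- `simR n u v RO X k` is the paper's `r_{k+1}`:  `r_1 = 0^u` and
`r_{i+1} = ` the first `u` bits of `RO(s_i)`. -/
def simR (n u v : ℕ) (RO : Bits n → Bits n) (X : Fin v → Bits u) : ℕ → Bits u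
  | 0 => fun _ => false
  | k + 1 => fun j => bitAt (RO (simStr n u v X k (simR n u v RO X k))) (j : ℕ)

/-- `simS n u v RO X k` is the paper's `s_{k+1}`. -/
def simS (n u v : ℕ) (RO : Bits n → Bits n) (X : Fin v → Bits u) (k : ℕ) : Bits n :=
  simStr n u v X k (simR n u v RO X k)
/-- Answers to the first `t` queries of a deterministic adaptive oracle algorithm whose
next-query function is `f`. -/
def advAns (n : ℕ) (RO : Bits n → Bits n) (f : List (Bits n) → Bits n) : ℕ → List (Bits n)
  | 0 => []
  | t + 1 => advAns n RO f t ++ [RO (f (advAns n RO f t))]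

/-- The `(t+1)`-st query (so the paper's `q_{t+1}`) of the adaptive algorithm `f`. -/
def advQ (n : ℕ) (RO : Bits n → Bits n) (f : List (Bits n) → Bits n) (t : ℕ) : Bits n :=
  f (advAns n RO f t)
/-- A deterministic MPC algorithm with `m` machines, local memory `s` bits, at most `q`
adaptive oracle queries (to an oracle on `n`-bit strings) per machine per round, on
inputs from `I`.  `init` splits the input into the machines' initial states, `qf k i` is
machine `i`'s next-query function in round `k` (from its state and the answers received
so far in the round), and `cf k i` produces the messages machine `i` sends to each
machine at the end of round `k`; each machine receives at most `s` bits per round. -/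
structure MPC (n s q m : ℕ) (I : Type) where
  init : I → Fin m → Bits s
  qf : ℕ → Fin m → Bits s → List (Bits n) → Bits n
  cf : ℕ → Fin m → Bits s → List (Bits n) → Fin m → List Bool
  comm_le : ∀ (k : ℕ) (st : Fin m → Bits s) (ans : Fin m → List (Bits n)) (j : Fin m),
    (∑ i : Fin m, (cf k i (st i) (ans i) j).length) ≤ s

/-- Pad/truncate a list of booleans to an `s`-bit state. -/
def listToBits (s : ℕ) (L : List Bool) : Bits s := fun b => L.getD (b : ℕ) false

/-- `mstate A RO X k i` : the state of machine `i` at the beginning of round `k` when the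
MPC algorithm `A` is run with oracle `RO` on input `X`. -/
def mstate {n s q m : ℕ} {I : Type} (A : MPC n s q m I) (RO : Bits n → Bits n) (X : I) :
    ℕ → Fin m → Bits s
  | 0 => A.init X
  | k + 1 => fun j =>
      listToBits s ((List.ofFn (fun i : Fin m =>
        A.cf k i (mstate A RO X k i)
          (advAns n RO (A.qf k i (mstate A RO X k i)) q) j)).flatten)

/-- The `(t+1)`-st oracle query of machine `i` in round `k` of the run of `A` with
oracle `RO` on input `X`. -/
def mquery {n s q m : ℕ} {I : Type} (A : MPC n s q m I) (RO : Bits n → Bits n) (X : I)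
    (k : ℕ) (i : Fin m) (t : ℕ) : Bits n :=
  advQ n RO (A.qf k i (mstate A RO X k i)) t

/-!
Condition on the oracle. A machine's queries in a round are then a function of its state, so each of
the `2 ^ s` states fixes a set of at most `q` guesses for a block of the input, namely the first `u`
bits of the queries; how the state was computed in earlier rounds is irrelevant. Indices in a window
of length `v` are distinct modulo `v`, so hitting `α` chain entries with indices in the window means
guessing `α` different blocks of `X`. For a fixed state and a fixed choice of `α` blocks this has
probability at most `(q / 2 ^ u) ^ α`, and a union bound over the states and the choices of blocks
finishes the proof.
-/

section UniformProbability

variable {Ω ι : Type} [Fintype Ω]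

lemma unifProb_mono {P Q : Ω → Prop} (h : ∀ ω, P ω → Q ω) : unifProb P ≤ unifProb Q := by
  unfold unifProb
  gcongr
  · exact Set.toFinite _
  · exact h _

lemma unifProb_exists_mem_le_sum (s : Finset ι) (P : ι → Ω → Prop) :
    unifProb (fun ω => ∃ i ∈ s, P i ω) ≤ ∑ i ∈ s, unifProb (P i) := by
  have union_bound : {ω | ∃ i ∈ s, P i ω}.ncard ≤ ∑ i ∈ s, {ω | P i ω}.ncard := by
    simpa only [Set.iUnion_ofPred, exists_prop] using s.set_ncard_biUnion_le fun i => {ω | P i ω}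
  unfold unifProb
  rw [← Finset.sum_div]
  gcongr
  exact_mod_cast union_bound

lemma unifProb_le_of_forall_left {Ω' : Type} [Fintype Ω'] [Nonempty Ω] {P : Ω × Ω' → Prop} {c : ℝ}
    (h : ∀ a, unifProb (fun b => P (a, b)) ≤ c) : unifProb P ≤ c := by
  classical
  have fibers : {ω | P ω}.ncard = ∑ a, {b | P (a, b)}.ncard := by
    simp only [Set.ncard_eq_toFinset_card', Set.toFinset_ofPred, Finset.card_filter,
      Fintype.sum_prod_type]
  have card_pos : (0 : ℝ) < Fintype.card Ω := by exact_mod_cast Fintype.card_pos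
  calc unifProb P = (∑ a, unifProb fun b => P (a, b)) / Fintype.card Ω := by
        simp only [unifProb, ← Finset.sum_div, fibers, Fintype.card_prod, Nat.cast_mul,
          Nat.cast_sum, div_div, mul_comm]
    _ ≤ (∑ _a : Ω, c) / Fintype.card Ω := by gcongr; exact h _
    _ = c := by
        rw [Finset.sum_const, nsmul_eq_mul, Finset.card_univ, mul_div_cancel_left₀ _ card_pos.ne']

lemma unifProb_forall_mem [Fintype ι] [DecidableEq ι] {β : ι → Type} [∀ i, Fintype (β i)]
    (D : ∀ i, Finset (β i)) :
    unifProb (fun X : ∀ i, β i => ∀ i, X i ∈ D i) =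
      ∏ i, ((D i).card / Fintype.card (β i) : ℝ) := by
  have box : {X : ∀ i, β i | ∀ i, X i ∈ D i} = ↑(Fintype.piFinset D) := by
    ext X
    simp only [Set.mem_ofPred_eq, Finset.mem_coe, Fintype.mem_piFinset]
  rw [unifProb, box, Set.ncard_coe_finset, Fintype.card_piFinset, Fintype.card_pi,
    Finset.prod_div_distrib, Nat.cast_prod, Nat.cast_prod]

lemma unifProb_forall_mem_finset [Fintype ι] [DecidableEq ι] {β : Type} [Fintype β]
    [Nonempty β] (J : Finset ι) (C : Finset β) :
    unifProb (fun X : ι → β => ∀ i ∈ J, X i ∈ C) =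
      ((C.card : ℝ) / Fintype.card β) ^ J.card := by
  have card_ne_zero : (Fintype.card β : ℝ) ≠ 0 := by exact_mod_cast Fintype.card_ne_zero
  calc unifProb (fun X : ι → β => ∀ i ∈ J, X i ∈ C)
      = unifProb (fun X : ι → β => ∀ i, X i ∈ if i ∈ J then C else Finset.univ) := by
        congr! 3 with X i
        split_ifs with hi <;> simp [hi]
    _ = ∏ i, if i ∈ J then (C.card : ℝ) / Fintype.card β else 1 := by
        rw [unifProb_forall_mem]
        refine Finset.prod_congr rfl fun i _ => ?_
        split_ifs
        · rfl
        · rw [Finset.card_univ, div_self card_ne_zero]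
    _ = ((C.card : ℝ) / Fintype.card β) ^ J.card := by
        rw [Finset.prod_ite_mem, Finset.univ_inter, Finset.prod_const]

end UniformProbability

section HitCount

variable {ι β σ : Type} [Fintype ι] [DecidableEq ι] [Fintype β] [DecidableEq β] [Fintype σ]

/-- The number of coordinates of `X` whose value lies in the set `C` of guesses. -/
def hitCount (C : Finset β) (X : ι → β) : ℕ := (Finset.univ.filter fun i => X i ∈ C).card

lemma unifProb_le_hitCount_le [Nonempty β] (C : Finset β) (α : ℕ) :
    unifProb (fun X : ι → β => α ≤ hitCount C X) ≤
      (Fintype.card ι).choose α * ((C.card : ℝ) / Fintype.card β) ^ α := by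
  calc unifProb (fun X : ι → β => α ≤ hitCount C X)
      ≤ unifProb (fun X : ι → β => ∃ J ∈ Finset.univ.powersetCard α, ∀ i ∈ J, X i ∈ C) := by
        refine unifProb_mono fun X hX => ?_
        obtain ⟨J, hJ, card_J⟩ := Finset.exists_subset_card_eq hX
        exact ⟨J, Finset.mem_powersetCard.2 ⟨J.subset_univ, card_J⟩,
          fun i hi => (Finset.mem_filter.1 (hJ hi)).2⟩
    _ ≤ ∑ J ∈ Finset.univ.powersetCard α, unifProb (fun X : ι → β => ∀ i ∈ J, X i ∈ C) :=
        unifProb_exists_mem_le_sum _ _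
    _ = ∑ _J ∈ (Finset.univ : Finset ι).powersetCard α,
          ((C.card : ℝ) / Fintype.card β) ^ α := by
        refine Finset.sum_congr rfl fun J hJ => ?_
        rw [unifProb_forall_mem_finset, (Finset.mem_powersetCard.1 hJ).2]
    _ = (Fintype.card ι).choose α * ((C.card : ℝ) / Fintype.card β) ^ α := by
        rw [Finset.sum_const, Finset.card_powersetCard, Finset.card_univ, nsmul_eq_mul]

lemma unifProb_le_hitCount_advice_le [Nonempty β] {q : ℕ} (C : σ → Finset β)
    (hC : ∀ z, (C z).card ≤ q) (advice : (ι → β) → σ) (α : ℕ) :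
    unifProb (fun X => α ≤ hitCount (C (advice X)) X) ≤
      Fintype.card σ * ((Fintype.card ι).choose α * ((q : ℝ) / Fintype.card β) ^ α) := by
  calc unifProb (fun X => α ≤ hitCount (C (advice X)) X)
      ≤ unifProb (fun X => ∃ z ∈ Finset.univ, α ≤ hitCount (C z) X) :=
        unifProb_mono fun X hX => ⟨advice X, Finset.mem_univ _, hX⟩
    _ ≤ ∑ z, unifProb (fun X : ι → β => α ≤ hitCount (C z) X) :=
        unifProb_exists_mem_le_sum _ _
    _ ≤ ∑ _z : σ, (Fintype.card ι).choose α * ((q : ℝ) / Fintype.card β) ^ α := by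
        refine Finset.sum_le_sum fun z _ => (unifProb_le_hitCount_le (C z) α).trans ?_
        gcongr
        exact hC z
    _ = Fintype.card σ * ((Fintype.card ι).choose α * ((q : ℝ) / Fintype.card β) ^ α) := by
        rw [Finset.sum_const, Finset.card_univ, nsmul_eq_mul]

end HitCount

lemma choose_mul_div_two_pow_pow_le (v q u α : ℕ) :
    v.choose α * ((q : ℝ) / 2 ^ u) ^ α ≤
      2 ^ (-((α : ℤ) * ((u : ℤ) - Nat.clog 2 q - Nat.clog 2 v))) := by
  have le_two_pow_clog (x : ℕ) : (x : ℝ) ≤ 2 ^ Nat.clog 2 x := by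
    exact_mod_cast Nat.le_pow_clog one_lt_two x
  calc v.choose α * ((q : ℝ) / 2 ^ u) ^ α
      ≤ v ^ α * ((q : ℝ) / 2 ^ u) ^ α := by
        gcongr
        exact_mod_cast Nat.choose_le_pow v α
    _ ≤ (2 ^ Nat.clog 2 v) ^ α * ((2 : ℝ) ^ Nat.clog 2 q / 2 ^ u) ^ α := by
        gcongr <;> exact le_two_pow_clog _
    _ = (2 ^ ((Nat.clog 2 v : ℤ) + (Nat.clog 2 q - u))) ^ α := by
        rw [zpow_add₀ two_ne_zero, zpow_sub₀ two_ne_zero, mul_pow]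
        simp only [zpow_natCast]
    _ = 2 ^ (-((α : ℤ) * ((u : ℤ) - Nat.clog 2 q - Nat.clog 2 v))) := by
        rw [← zpow_natCast, ← zpow_mul]
        congr 1
        ring

lemma card_bits_mul_choose_mul_pow_le (s v q u α : ℕ) :
    Fintype.card (Bits s) * (v.choose α * ((q : ℝ) / 2 ^ u) ^ α) ≤
      2 ^ (-((α : ℤ) * ((u : ℤ) - Nat.clog 2 q - Nat.clog 2 v) - s - 1)) := by
  have card_bits : (Fintype.card (Bits s) : ℝ) = 2 ^ (s : ℤ) := by simp
  calc Fintype.card (Bits s) * (v.choose α * ((q : ℝ) / 2 ^ u) ^ α)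
      ≤ 2 ^ (s : ℤ) * 2 ^ (-((α : ℤ) * ((u : ℤ) - Nat.clog 2 q - Nat.clog 2 v))) := by
        rw [card_bits]
        gcongr
        exact choose_mul_div_two_pow_pow_le v q u α
    _ = 2 ^ ((s : ℤ) + -((α : ℤ) * ((u : ℤ) - Nat.clog 2 q - Nat.clog 2 v))) :=
        (zpow_add₀ two_ne_zero _ _).symm
    _ ≤ 2 ^ (-((α : ℤ) * ((u : ℤ) - Nat.clog 2 q - Nat.clog 2 v) - s - 1)) :=
        zpow_le_zpow_right₀ one_le_two (by linarith)

section SimLine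

variable {n u v : ℕ}

/-- The first `u` bits of `y`, where a SimLine query carries a block of the input; padded with
`false` if `y` is shorter. -/
def takeBits (u : ℕ) (y : Bits n) : Bits u := fun b => bitAt y b

lemma takeBits_simS (hun : u ≤ n) (RO : Bits n → Bits n) (X : Fin v → Bits u) (k : ℕ) :
    takeBits u (simS n u v RO X k) = getX X (k % v) := by
  funext b
  simp [takeBits, bitAt, simS, simStr, b.isLt.trans_le hun]

/-- The guesses for an input block made by the first `q` queries: their first `u` bits. -/
def guesses (u q : ℕ) (Q : ℕ → Bits n) : Finset (Bits u) :=
  (Finset.range q).image fun t => takeBits u (Q t)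

lemma card_guesses_le (u q : ℕ) (Q : ℕ → Bits n) : (guesses u q Q).card ≤ q :=
  Finset.card_image_le.trans_eq (Finset.card_range q)

lemma ncard_queries_inter_simS_le_hitCount (hun : u ≤ n) {a : ℕ} {I : Finset ℕ}
    (hI : I ⊆ Finset.Icc (a + 1) (a + v)) (RO : Bits n → Bits n) (X : Fin v → Bits u)
    (q : ℕ) (Q : ℕ → Bits n) :
    Set.ncard ({y | ∃ t < q, Q t = y} ∩ {y | ∃ j ∈ I, simS n u v RO X (j - 1) = y}) ≤
      hitCount (guesses u q Q) X := by
  have mem_window : ∀ j ∈ I, a + 1 ≤ j ∧ j ≤ a + v := fun j hj => Finset.mem_Icc.1 (hI hj)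
  let hits := I.filter fun j => ∃ t < q, Q t = simS n u v RO X (j - 1)
  have ncard_le_hits : Set.ncard ({y | ∃ t < q, Q t = y} ∩
      {y | ∃ j ∈ I, simS n u v RO X (j - 1) = y}) ≤ hits.card := by
    refine (Set.ncard_le_ncard ?_ (Set.toFinite _)).trans
      ((Set.ncard_coe_finset _).trans_le
        (Finset.card_image_le (s := hits) (f := fun j => simS n u v RO X (j - 1))))
    rintro _ ⟨hQ, j, hj, rfl⟩
    exact Finset.mem_image_of_mem _ (Finset.mem_filter.2 ⟨hj, hQ⟩)
  refine ncard_le_hits.trans ?_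
  rw [hitCount, ← Finset.card_map Fin.valEmbedding]
  refine Finset.card_le_card_of_injOn (fun j => (j - 1) % v) (fun j hj => ?_)
    fun j hj j' hj' hmod => ?_
  · obtain ⟨hjI, t, ht, hQ⟩ := Finset.mem_filter.1 hj
    have hlt : (j - 1) % v < v := Nat.mod_lt _ (by have := mem_window j hjI; omega)
    have block_guessed : X ⟨(j - 1) % v, hlt⟩ ∈ guesses u q Q :=
      Finset.mem_image.2 ⟨t, Finset.mem_range.2 ht, by
        rw [hQ, takeBits_simS hun, getX, dif_pos hlt]⟩
    exact Finset.mem_map.2 ⟨_, Finset.mem_filter.2 ⟨Finset.mem_univ _, block_guessed⟩, rfl⟩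
  · have hj := mem_window j (Finset.mem_filter.1 hj).1
    have hj' := mem_window j' (Finset.mem_filter.1 hj').1
    have pred_eq : j - 1 = j' - 1 := Nat.mod_injOn_Ico a v
      (Finset.mem_coe.2 (Finset.mem_Ico.2 (by omega)))
      (Finset.mem_coe.2 (Finset.mem_Ico.2 (by omega))) hmod
    omega

theorem stmt11_general {σ : Type} [Fintype σ] (hun : u ≤ n)
    (state : (Bits n → Bits n) → (Fin v → Bits u) → σ)
    (query : (Bits n → Bits n) → σ → ℕ → Bits n)
    {a : ℕ} {I : Finset ℕ} (hI : I ⊆ Finset.Icc (a + 1) (a + v)) (q α : ℕ) :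
    unifProb (fun ω : (Bits n → Bits n) × (Fin v → Bits u) =>
      α ≤ Set.ncard ({y : Bits n | ∃ t < q, query ω.1 (state ω.1 ω.2) t = y} ∩
        {y : Bits n | ∃ j ∈ I, simS n u v ω.1 ω.2 (j - 1) = y})) ≤
    Fintype.card σ * (v.choose α * ((q : ℝ) / 2 ^ u) ^ α) := by
  refine unifProb_le_of_forall_left fun RO => ?_
  calc _ ≤ unifProb (fun X => α ≤ hitCount (guesses u q (query RO (state RO X))) X) :=
        unifProb_mono fun X hX =>
          hX.trans (ncard_queries_inter_simS_le_hitCount hun hI RO X q _)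
    _ ≤ _ := unifProb_le_hitCount_advice_le (fun z => guesses u q (query RO z))
        (fun z => card_guesses_le u q _) (state RO) α
    _ = _ := by simp

end SimLine

/-- **Lemma `mrsmallint` (Lemma A.3).**
In the SimLine setting with `u ≥ ⌈log₂ q⌉ + ⌈log₂ v⌉`, for any deterministic MPC
algorithm (`m` machines, `s`-bit local memory, at most `q` queries per machine per
round), any machine `i`, round `k`, window `I ⊆ {a+1, …, min(a+v, w)}` and `α ≥ 1`, the
probability over uniformly random `(RO, X)` that machine `i`'s round-`k` queries hit at
least `α` of the SimLine entries `{s_j : j ∈ I}` is at most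
`2^(−(α(u − ⌈log₂ q⌉ − ⌈log₂ v⌉) − s − 1))`. -/
theorem stmt11 (n u v w s q m : ℕ) (hu : 1 ≤ u) (hn : 2 * u ≤ n) (hv : 2 ≤ v)
    (hw : 2 ≤ w) (hs : 1 ≤ s) (hq : 1 ≤ q) (hm : 1 ≤ m)
    (huq : Nat.clog 2 q + Nat.clog 2 v ≤ u)
    (A : MPC n s q m (Fin v → Bits u)) (i : Fin m) (k : ℕ)
    (a : ℕ) (I : Finset ℕ) (hI : I ⊆ Finset.Icc (a + 1) (min (a + v) w))
    (α : ℕ) (hα : 1 ≤ α) :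
    unifProb (fun ω : (Bits n → Bits n) × (Fin v → Bits u) =>
      α ≤ Set.ncard ({y : Bits n | ∃ t < q, mquery A ω.1 ω.2 k i t = y} ∩
        {y : Bits n | ∃ j ∈ I, simS n u v ω.1 ω.2 (j - 1) = y})) ≤
    (2 : ℝ) ^ (-((α : ℤ) * ((u : ℤ) - (Nat.clog 2 q : ℤ) - (Nat.clog 2 v : ℤ))
      - (s : ℤ) - 1)) := by
  exact (stmt11_general (by omega) (fun RO X => mstate A RO X k i)
    (fun RO st => advQ n RO (A.qf k i st))
    (hI.trans (Finset.Icc_subset_Icc_right (min_le_left _ _))) q α).trans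
      (card_bits_mul_choose_mul_pow_le s v q u α)
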